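/- (Partial identification under monotone treatment response.) Suppose Assumption DID holds for each path d in {(1,1),(0,1),(1,0)} relative to d' = (0,0), that P(D = e | X) > 0 a.s. for every e in {0,1}^2, that E[Y2(1,0) − Y2(0,0) | D = (1,0), X] ≥ 0 a.s. (monotone treatment response), and that there is a real constant Y_min with Y2(e) ≥ Y_min a.s. for every e in {0,1}^2. Then, a.s., E[ΔY | D2 = 1, X] − E[ΔY | D2 = 0, X] ≤ E[Y2(1,1) − Y2(0,0) | D = (1,1), X] · P(D1 = 1 | D2 = 1, X) + E[Y2(0,1) − Y2(0,0) | D = (0,1), X] · P(D1 = 0 | D2 = 1, X) ≤ E[ΔY | D2 = 1, X] − E[ΔY | D2 = 0, X] + E[Y2 | D2 = 0, X] − Y_min. -/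

import Mathlib

open MeasureTheory Set
open scoped Classical

noncomputable section

namespace DIDMissing

variable {Ω : Type*} {𝓧 : Type*}

/-- Real-valued indicator of a set. -/
def ind (A : Set Ω) : Ω → ℝ := A.indicator fun _ => (1 : ℝ)

/-- All treatment paths `{0,1}²` (coded as reals). -/
def allPaths : Set (ℝ × ℝ) := {(0, 0), (0, 1), (1, 0), (1, 1)}

/-- The three treated paths `{(1,1), (0,1), (1,0)}`. -/
def threePaths : Set (ℝ × ℝ) := {(1, 1), (0, 1), (1, 0)}

/-- The event `{D = d}` for a treatment path `d = (d₁, d₂)`. -/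
def evD (D1 D2 : Ω → ℝ) (d : ℝ × ℝ) : Set Ω := {ω | D1 ω = d.1 ∧ D2 ω = d.2}

/-- The event `{D₂ = b}`. -/
def evD2 (D2 : Ω → ℝ) (b : ℝ) : Set Ω := {ω | D2 ω = b}

/-- `g` is a (measurable-in-the-covariate) version of the conditional mean `E[Z ∣ A, X]`:
for every bounded measurable `h`, `E[1_A · Z · h(X)] = E[1_A · g(X) · h(X)]`. -/
def IsCondMeanGiven [MeasurableSpace Ω] [MeasurableSpace 𝓧] (P : Measure Ω) (X : Ω → 𝓧)
    (A : Set Ω) (Z : Ω → ℝ) (g : 𝓧 → ℝ) : Prop :=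
  Measurable g ∧
    ∀ h : 𝓧 → ℝ, Measurable h → (∃ C, ∀ x, |h x| ≤ C) →
      ∫ ω, ind A ω * Z ω * h (X ω) ∂P = ∫ ω, ind A ω * g (X ω) * h (X ω) ∂P

/-- Assumption DID for a path `d` relative to `d' = (0,0)`:
(i) no anticipation, `E[Y₀(d) ∣ D = d, X] = E[Y₀(0,0) ∣ D = d, X]` a.s., stated in the
version-free integral form; and (ii) conditional parallel trends, stated as the existence
of a common version of `E[Y₂(0,0) − Y₀(0,0) ∣ X]` and `E[Y₂(0,0) − Y₀(0,0) ∣ D = d, X]`. -/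
def DID [MeasurableSpace Ω] [MeasurableSpace 𝓧] (P : Measure Ω) (X : Ω → 𝓧)
    (D1 D2 : Ω → ℝ) (Y0p Y2p : ℝ × ℝ → Ω → ℝ) (d : ℝ × ℝ) : Prop :=
  (∀ h : 𝓧 → ℝ, Measurable h → (∃ C, ∀ x, |h x| ≤ C) →
      ∫ ω, ind (evD D1 D2 d) ω * Y0p d ω * h (X ω) ∂P
        = ∫ ω, ind (evD D1 D2 d) ω * Y0p (0, 0) ω * h (X ω) ∂P) ∧
  (∃ tr : 𝓧 → ℝ,
      IsCondMeanGiven P X Set.univ (fun ω => Y2p (0, 0) ω - Y0p (0, 0) ω) tr ∧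
      IsCondMeanGiven P X (evD D1 D2 d) (fun ω => Y2p (0, 0) ω - Y0p (0, 0) ω) tr)

/-- Assumption MAR: `S ⟂ (D₁, ΔY) ∣ (D₂, X)`, where `q d₂` is a version of the
missing-data probability `P(S = 1 ∣ D₂ = d₂, X)`, which is `(0,1]`-valued a.s. -/
def MAR [MeasurableSpace Ω] [MeasurableSpace 𝓧] (P : Measure Ω) (X : Ω → 𝓧)
    (D1 D2 S Y0 Y2 : Ω → ℝ) (q : ℝ → 𝓧 → ℝ) : Prop :=
  (∀ d2 ∈ ({0, 1} : Set ℝ), IsCondMeanGiven P X (evD2 D2 d2) S (q d2)) ∧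
  (∀ d2 ∈ ({0, 1} : Set ℝ), ∀ᵐ ω ∂P, 0 < q d2 (X ω) ∧ q d2 (X ω) ≤ 1) ∧
  (∀ d2 ∈ ({0, 1} : Set ℝ), ∀ f : ℝ × ℝ → ℝ, Measurable f → (∃ C, ∀ p, |f p| ≤ C) →
      ∀ h : 𝓧 → ℝ, Measurable h → (∃ C, ∀ x, |h x| ≤ C) →
        ∫ ω, ind (evD2 D2 d2) ω * S ω * f (D1 ω, Y2 ω - Y0 ω) * h (X ω) ∂P
          = ∫ ω, ind (evD2 D2 d2) ω * q d2 (X ω) * f (D1 ω, Y2 ω - Y0 ω) * h (X ω) ∂P)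

/-- The path-dependent ATT `τ_{d,(0,0)} = E[Y₂(d) − Y₂(0,0) ∣ D = d]`. -/
def tau [MeasurableSpace Ω] (P : Measure Ω) (D1 D2 : Ω → ℝ)
    (Y2p : ℝ × ℝ → Ω → ℝ) (d : ℝ × ℝ) : ℝ :=
  (P (evD D1 D2 d)).toReal⁻¹ * ∫ ω in evD D1 D2 d, (Y2p d ω - Y2p (0, 0) ω) ∂P

/-!
Write `m_b(X)` for `E[ΔY ∣ D₂ = b, X]` and `t(X)` for the untreated trend
`E[Y₂(0,0) − Y₀(0,0) ∣ X]`. Parallel trends along `(1,1)` and `(0,1)` make `t(X)` the trend given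
`D₂ = 1`; being also the trend given `X` alone, it is then the trend given the complementary event
`D₂ = 0`. With no anticipation, `m_b(X) − t(X) = E[Y₂ − Y₂(0,0) ∣ D₂ = b, X]` for both `b`.

For `b = 1` this effect is the mixture to be bounded. For `b = 0` it is nonnegative, being
nonnegative on `D = (1,0)` by monotone treatment response and zero on `D = (0,0)`, and at most
`E[Y₂ ∣ D₂ = 0, X] − Y_min` since `Y₂(0,0) ≥ Y_min`. Eliminating `t(X)` gives both bounds.
-/

open scoped ProbabilityTheory

section HasCondMean

variable {m mΩ : MeasurableSpace Ω} {P : Measure Ω} {A B : Set Ω} {Z W G H : Ω → ℝ}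

/-- `G` is a conditional mean `E[Z ∣ A, m]` of `Z` given the event `A` and the σ-algebra `m`,
encoded by Bayes' rule `E[1_A Z ∣ m] = P(A ∣ m) G`; nothing is required of `G` where
`P(A ∣ m) = 0`. Unlike in `IsCondMeanGiven`, `G` lives on `Ω` and the relation is between
functions, so that conditional means given different events can be combined pointwise. -/
def HasCondMean (P : Measure[mΩ] Ω) (m : MeasurableSpace Ω) (A : Set Ω) (Z G : Ω → ℝ) : Prop :=
  P[A.indicator Z | m] =ᵐ[P] P⟦A | m⟧ * G

theorem condExp_indicator_union (hA : MeasurableSet A) (hB : MeasurableSet B) (hAB : Disjoint A B)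
    (hZ : Integrable Z P) :
    P[(A ∪ B).indicator Z | m] =ᵐ[P] P[A.indicator Z | m] + P[B.indicator Z | m] := by
  rw [indicator_union_of_disjoint hAB]
  exact condExp_add (hZ.indicator hA) (hZ.indicator hB) m

theorem condProb_union [IsFiniteMeasure P] (hA : MeasurableSet A) (hB : MeasurableSet B)
    (hAB : Disjoint A B) : P⟦A ∪ B | m⟧ =ᵐ[P] P⟦A | m⟧ + P⟦B | m⟧ :=
  condExp_indicator_union hA hB hAB (integrable_const 1)

theorem condProb_mono [IsFiniteMeasure P] (hA : MeasurableSet A) (hB : MeasurableSet B)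
    (hAB : A ⊆ B) : P⟦A | m⟧ ≤ᵐ[P] P⟦B | m⟧ :=
  condExp_mono ((integrable_const 1).indicator hA) ((integrable_const 1).indicator hB)
    (.of_forall (indicator_le_indicator_of_subset hAB fun _ => zero_le_one))

theorem condProb_nonneg : 0 ≤ᵐ[P] P⟦A | m⟧ :=
  condExp_nonneg (.of_forall (indicator_nonneg fun _ _ => zero_le_one))

theorem hasCondMean_univ_iff [IsFiniteMeasure P] (hm : m ≤ mΩ) :
    HasCondMean P m univ Z G ↔ P[Z | m] =ᵐ[P] G := by
  have h1 : (fun _ : Ω => (1 : ℝ)) * G = G := one_mul G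
  rw [HasCondMean, indicator_univ, indicator_univ, condExp_const hm, h1]

theorem hasCondMean_const (c : ℝ) : HasCondMean P m A (fun _ => c) (fun _ => c) := by
  have hc : A.indicator (fun _ => c) = c • A.indicator fun _ => (1 : ℝ) := by
    ext ω
    by_cases hω : ω ∈ A <;> simp [hω]
  rw [HasCondMean, hc]
  filter_upwards [condExp_smul c (A.indicator fun _ => (1 : ℝ)) m] with ω hω
  rw [hω, Pi.smul_apply, Pi.mul_apply, smul_eq_mul, mul_comm]

theorem hasCondMean_of_ae_eq_condExp_restrict [IsFiniteMeasure P] (hm : m ≤ mΩ)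
    (hA : MeasurableSet A) (hZ : Integrable Z P) (hG : StronglyMeasurable[m] G)
    (h : G =ᵐ[P.restrict A] (P.restrict A)[Z | m]) : HasCondMean P m A Z G := by
  have hGA : Integrable (A.indicator G) P :=
    (integrable_indicator_iff hA).2 (integrable_condExp.congr h.symm)
  have hset : P[A.indicator G | m] =ᵐ[P] P[A.indicator Z | m] := by
    refine ae_eq_condExp_of_forall_setIntegral_eq hm (hZ.indicator hA)
      (fun s _ _ => integrable_condExp.integrableOn) (fun s hs _ => ?_)
      stronglyMeasurable_condExp.aestronglyMeasurable
    have restrict_comm (F : Ω → ℝ) :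
        ∫ ω in s, A.indicator F ω ∂P = ∫ ω in s, F ω ∂P.restrict A := by
      rw [setIntegral_indicator hA, Measure.restrict_restrict (hm s hs)]
    calc ∫ ω in s, (P[A.indicator G | m]) ω ∂P
      _ = ∫ ω in s, G ω ∂P.restrict A := by rw [setIntegral_condExp hm hGA hs, restrict_comm]
      _ = ∫ ω in s, ((P.restrict A)[Z | m]) ω ∂P.restrict A :=
          integral_congr_ae (ae_restrict_of_ae h)
      _ = ∫ ω in s, A.indicator Z ω ∂P := by
          rw [setIntegral_condExp hm hZ.restrict hs, restrict_comm]
  have hmul : A.indicator G = A.indicator (fun _ => (1 : ℝ)) * G := by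
    ext ω
    by_cases hω : ω ∈ A <;> simp [hω]
  have hpull : P[A.indicator G | m] =ᵐ[P] P⟦A | m⟧ * G := by
    rw [hmul] at hGA ⊢
    exact condExp_mul_of_stronglyMeasurable_right hG hGA ((integrable_const 1).indicator hA)
  exact hset.symm.trans hpull

namespace HasCondMean

theorem congr (hZ : HasCondMean P m A Z G) (h : EqOn Z W A) : HasCondMean P m A W G := by
  rwa [HasCondMean, ← indicator_congr h]

theorem congr_right (hZ : HasCondMean P m A Z G) (h : G =ᵐ[P] H) : HasCondMean P m A Z H :=
  hZ.trans (h.mono fun ω hω => by simp only [Pi.mul_apply, hω])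

theorem sub (hA : MeasurableSet A) (hZi : Integrable Z P) (hWi : Integrable W P)
    (hZ : HasCondMean P m A Z G) (hW : HasCondMean P m A W H) :
    HasCondMean P m A (Z - W) (G - H) := by
  rw [HasCondMean, indicator_sub']
  filter_upwards [condExp_sub (hZi.indicator hA) (hWi.indicator hA) m, hZ, hW] with ω h hZω hWω
  rw [h, Pi.sub_apply, hZω, hWω]
  exact (mul_sub _ _ _).symm

theorem union_mixture {p q : Ω → ℝ} (hA : MeasurableSet A) (hB : MeasurableSet B)
    (hAB : Disjoint A B) (hZ : Integrable Z P)
    (hZA : HasCondMean P m A Z G) (hZB : HasCondMean P m B Z H)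
    (hp : HasCondMean P m (A ∪ B) (ind A) p) (hq : HasCondMean P m (A ∪ B) (ind B) q) :
    HasCondMean P m (A ∪ B) Z (G * p + H * q) := by
  rw [HasCondMean, ind, indicator_indicator, union_inter_cancel_left] at hp
  rw [HasCondMean, ind, indicator_indicator, union_inter_cancel_right] at hq
  filter_upwards [condExp_indicator_union (m := m) hA hB hAB hZ, hZA, hZB, hp, hq]
    with ω hsum hAω hBω hpω hqω
  simp only [Pi.add_apply, Pi.mul_apply] at *
  linear_combination hsum + hAω + hBω + G ω * hpω + H ω * hqω

theorem ae_le_of_ae_le (hA : MeasurableSet A) (hpos : ∀ᵐ ω ∂P, 0 < (P⟦A | m⟧) ω)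
    (hZi : Integrable Z P) (hWi : Integrable W P)
    (hZ : HasCondMean P m A Z G) (hW : HasCondMean P m A W H) (h : ∀ᵐ ω ∂P, ω ∈ A → Z ω ≤ W ω) :
    G ≤ᵐ[P] H := by
  have hmono : P[A.indicator Z | m] ≤ᵐ[P] P[A.indicator W | m] :=
    condExp_mono (hZi.indicator hA) (hWi.indicator hA)
      (h.mono fun ω hω => indicator_le_indicator' hω)
  filter_upwards [hmono, hpos, hZ, hW] with ω hle hposω hZω hWω
  rw [hZω, hWω] at hle
  exact le_of_mul_le_mul_left hle hposω

theorem ae_eq (hpos : ∀ᵐ ω ∂P, 0 < (P⟦A | m⟧) ω)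
    (hG : HasCondMean P m A Z G) (hH : HasCondMean P m A Z H) : G =ᵐ[P] H := by
  filter_upwards [hpos, hG, hH] with ω hposω hGω hHω
  exact mul_left_cancel₀ hposω.ne' (hGω.symm.trans hHω)

theorem nonneg_of_union {K : Ω → ℝ} (hA : MeasurableSet A) (hB : MeasurableSet B)
    (hAB : Disjoint A B) (hpos : ∀ᵐ ω ∂P, 0 < (P⟦A ∪ B | m⟧) ω) (hZ : Integrable Z P)
    (hZA : HasCondMean P m A Z G) (hZB : HasCondMean P m B Z H)
    (hZAB : HasCondMean P m (A ∪ B) Z K) (hG : 0 ≤ᵐ[P] G) (hH : 0 ≤ᵐ[P] H) : 0 ≤ᵐ[P] K := by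
  filter_upwards [condExp_indicator_union (m := m) hA hB hAB hZ, condProb_nonneg (m := m) (A := A),
    condProb_nonneg (m := m) (A := B), hpos, hZA, hZB, hZAB, hG, hH]
    with ω hsum hAnn hBnn hposω hAω hBω hABω hGω hHω
  refine nonneg_of_mul_nonneg_right ?_ hposω
  rw [← Pi.mul_apply, ← hABω, hsum, Pi.add_apply, hAω, hBω]
  exact add_nonneg (mul_nonneg hAnn hGω) (mul_nonneg hBnn hHω)

theorem union [IsFiniteMeasure P] (hA : MeasurableSet A) (hB : MeasurableSet B)
    (hAB : Disjoint A B) (hZ : Integrable Z P) (hZA : HasCondMean P m A Z G)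
    (hZB : HasCondMean P m B Z G) :
    HasCondMean P m (A ∪ B) Z G := by
  filter_upwards [condExp_indicator_union (m := m) hA hB hAB hZ,
    condProb_union (m := m) hA hB hAB, hZA, hZB] with ω hsum hprob hAω hBω
  rw [hsum, Pi.mul_apply, hprob, Pi.add_apply, hAω, hBω]
  exact (add_mul _ _ _).symm

theorem of_union_left [IsFiniteMeasure P] (hA : MeasurableSet A) (hB : MeasurableSet B)
    (hAB : Disjoint A B) (hZ : Integrable Z P) (hZAB : HasCondMean P m (A ∪ B) Z G)
    (hZB : HasCondMean P m B Z G) : HasCondMean P m A Z G := by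
  filter_upwards [condExp_indicator_union (m := m) hA hB hAB hZ,
    condProb_union (m := m) hA hB hAB, hZAB, hZB] with ω hsum hprob hABω hBω
  simp only [Pi.add_apply, Pi.mul_apply] at *
  linear_combination hABω - hsum - hBω + G ω * hprob

end HasCondMean

end HasCondMean

section Versions

variable {mΩ : MeasurableSpace Ω} [m𝓧 : MeasurableSpace 𝓧] {P : Measure Ω}
  {X : Ω → 𝓧} {A : Set Ω} {Z W : Ω → ℝ} {g : 𝓧 → ℝ}

theorem integral_ind_mul (hA : MeasurableSet A) (F h : Ω → ℝ) :
    ∫ ω, ind A ω * F ω * h ω ∂P = ∫ ω in A, F ω * h ω ∂P := by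
  rw [← integral_indicator hA]
  congr 1 with ω
  by_cases hω : ω ∈ A <;> simp [ind, hω]

-- The defining identity does not presuppose that `g ∘ X` is integrable, so it is first used on
-- the events `|g ∘ X| ≤ n`, which exhaust `Ω`.
theorem ae_eq_condExp_comap_of_forall_integral_mul_eq [IsFiniteMeasure P] (hX : Measurable X)
    (hZ : Integrable Z P) (hg : Measurable g)
    (h : ∀ h : 𝓧 → ℝ, Measurable h → (∃ C, ∀ x, |h x| ≤ C) →
      ∫ ω, Z ω * h (X ω) ∂P = ∫ ω, g (X ω) * h (X ω) ∂P) :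
    g ∘ X =ᵐ[P] P[Z | m𝓧.comap X] := by
  have hset (S : Set 𝓧) (hS : MeasurableSet S) :
      ∫ ω in X ⁻¹' S, g (X ω) ∂P = ∫ ω in X ⁻¹' S, Z ω ∂P := by
    have hmul (F : Ω → ℝ) : ∫ ω in X ⁻¹' S, F ω ∂P = ∫ ω, F ω * S.indicator 1 (X ω) ∂P := by
      rw [← integral_indicator (hX hS)]
      congr 1 with ω
      by_cases hω : X ω ∈ S <;> simp [hω]
    rw [hmul, hmul]
    refine (h _ (measurable_one.indicator hS) ⟨1, fun x => ?_⟩).symm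
    by_cases hx : x ∈ S <;> simp [hx]
  let T : ℕ → Set 𝓧 := fun n => {x | |g x| ≤ n}
  have hT (n : ℕ) : MeasurableSet (T n) := measurableSet_le hg.abs measurable_const
  have htrunc (n : ℕ) : (X ⁻¹' T n).indicator (g ∘ X) =ᵐ[P]
      (X ⁻¹' T n).indicator (P[Z | m𝓧.comap X]) := by
    have hint : Integrable ((X ⁻¹' T n).indicator (g ∘ X)) P := by
      refine .of_bound ((hg.comp hX).indicator (hX (hT n))).aestronglyMeasurable n
        (.of_forall fun ω => ?_)
      rw [norm_indicator_eq_indicator_norm]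
      exact indicator_le' (fun ω hω => hω) (fun _ _ => n.cast_nonneg) ω
    refine .trans ?_ (condExp_indicator hZ ⟨T n, hT n, rfl⟩)
    refine ae_eq_condExp_of_forall_setIntegral_eq hX.comap_le (hZ.indicator (hX (hT n)))
      (fun s _ _ => hint.integrableOn) ?_
      (((hg.comp (comap_measurable X)).indicator ⟨T n, hT n, rfl⟩).aestronglyMeasurable)
    rintro _ ⟨S, hS, rfl⟩ -
    rw [setIntegral_indicator (hX (hT n)), setIntegral_indicator (hX (hT n)), ← preimage_inter]
    exact hset _ (hS.inter (hT n))
  filter_upwards [ae_all_iff.2 htrunc] with ω hω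
  obtain ⟨n, hn⟩ := exists_nat_ge |g (X ω)|
  have hmem : ω ∈ X ⁻¹' T n := hn
  simpa only [indicator_of_mem hmem] using hω n

theorem integrable_ind [IsFiniteMeasure P] (hA : MeasurableSet A) : Integrable (ind A) P :=
  (integrable_const 1).indicator hA

namespace IsCondMeanGiven

theorem hasCondMean [IsFiniteMeasure P] (hg : IsCondMeanGiven P X A Z g) (hX : Measurable X)
    (hA : MeasurableSet A) (hZ : Integrable Z P) : HasCondMean P (m𝓧.comap X) A Z (g ∘ X) := by
  refine hasCondMean_of_ae_eq_condExp_restrict hX.comap_le hA hZ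
    (hg.1.comp (comap_measurable X)).stronglyMeasurable ?_
  refine ae_eq_condExp_comap_of_forall_integral_mul_eq hX hZ.restrict hg.1 fun h hh hC => ?_
  rw [← integral_ind_mul hA, ← integral_ind_mul hA]
  exact hg.2 h hh hC

theorem congr (hg : IsCondMeanGiven P X A Z g) (h : EqOn Z W A) : IsCondMeanGiven P X A W g := by
  have hind : (fun ω => ind A ω * Z ω) = fun ω => ind A ω * W ω := by
    ext ω
    by_cases hω : ω ∈ A
    · rw [h hω]
    · simp [ind, hω]
  refine ⟨hg.1, fun k hk hC => ?_⟩
  rw [← hg.2 k hk hC]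
  simp only [fun ω => (congrFun hind ω).symm]

theorem condProb_pos [IsFiniteMeasure P] (hg : IsCondMeanGiven P X univ (ind A) g)
    (hX : Measurable X) (hA : MeasurableSet A) (hpos : ∀ᵐ ω ∂P, 0 < g (X ω)) :
    ∀ᵐ ω ∂P, 0 < (P⟦A | m𝓧.comap X⟧) ω := by
  have heq : P⟦A | m𝓧.comap X⟧ =ᵐ[P] g ∘ X := (hasCondMean_univ_iff hX.comap_le).1
    (hg.hasCondMean hX .univ (integrable_ind hA))
  filter_upwards [heq, hpos] with ω hω hposω
  rwa [hω]

end IsCondMeanGiven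

end Versions

section TreatmentPaths

variable {D1 D2 : Ω → ℝ} {d e : ℝ × ℝ} {b : ℝ}

theorem eq_zero_or_mem_threePaths (hd : d ∈ allPaths) : d = (0, 0) ∨ d ∈ threePaths := by
  simp only [allPaths, threePaths, mem_insert_iff, mem_singleton_iff] at *
  tauto

theorem mk_mem_allPaths {a : ℝ} (ha : a = 0 ∨ a = 1) (hb : b = 0 ∨ b = 1) :
    (a, b) ∈ allPaths := by
  rcases ha with rfl | rfl <;> rcases hb with rfl | rfl <;> simp [allPaths]

theorem disjoint_evD (h : d ≠ e) : Disjoint (evD D1 D2 d) (evD D1 D2 e) :=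
  disjoint_left.2 fun _ hd he =>
    h (Prod.ext (hd.1.symm.trans he.1) (hd.2.symm.trans he.2))

theorem evD2_eq_union (hD1v : ∀ ω, D1 ω = 0 ∨ D1 ω = 1) :
    evD2 D2 b = evD D1 D2 (1, b) ∪ evD D1 D2 (0, b) := by
  ext ω
  rcases hD1v ω with h | h <;> simp [evD2, evD, h]

theorem univ_eq_evD2_union (hD2v : ∀ ω, D2 ω = 0 ∨ D2 ω = 1) :
    univ = evD2 D2 0 ∪ evD2 D2 1 :=
  (eq_univ_of_forall hD2v).symm

theorem eqOn_evD {Y : Ω → ℝ} {Yp : ℝ × ℝ → Ω → ℝ} (hcons : ∀ ω, Y ω = Yp (D1 ω, D2 ω) ω) :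
    EqOn Y (Yp d) (evD D1 D2 d) := by
  rintro ω ⟨h1, h2⟩
  rw [hcons, h1, h2]

variable {m mΩ : MeasurableSpace Ω} {P : Measure Ω} {Z G H : Ω → ℝ}

theorem measurableSet_evD2 (hD2 : Measurable D2) : MeasurableSet (evD2 D2 b) :=
  measurableSet_eq_fun hD2 measurable_const

theorem measurableSet_evD (hD1 : Measurable D1) (hD2 : Measurable D2) :
    MeasurableSet (evD D1 D2 d) :=
  (measurableSet_eq_fun hD1 measurable_const).inter (measurableSet_eq_fun hD2 measurable_const)

namespace HasCondMean

theorem evD2_of_evD [IsFiniteMeasure P] (hD1 : Measurable D1) (hD2 : Measurable D2)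
    (hD1v : ∀ ω, D1 ω = 0 ∨ D1 ω = 1) (hZ : Integrable Z P)
    (h : ∀ a, a = 0 ∨ a = 1 → HasCondMean P m (evD D1 D2 (a, b)) Z G) :
    HasCondMean P m (evD2 D2 b) Z G := by
  rw [evD2_eq_union hD1v]
  exact (h 1 (.inr rfl)).union (measurableSet_evD hD1 hD2) (measurableSet_evD hD1 hD2)
    (disjoint_evD (by simp)) hZ (h 0 (.inl rfl))

theorem evD2_mixture {p q : Ω → ℝ} (hD1 : Measurable D1) (hD2 : Measurable D2)
    (hD1v : ∀ ω, D1 ω = 0 ∨ D1 ω = 1) (hZ : Integrable Z P)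
    (hG : HasCondMean P m (evD D1 D2 (1, b)) Z G) (hH : HasCondMean P m (evD D1 D2 (0, b)) Z H)
    (hp : HasCondMean P m (evD2 D2 b) (ind {ω | D1 ω = 1}) p)
    (hq : HasCondMean P m (evD2 D2 b) (ind {ω | D1 ω = 0}) q) :
    HasCondMean P m (evD2 D2 b) Z (G * p + H * q) := by
  have hind (a : ℝ) : EqOn (ind {ω | D1 ω = a}) (ind (evD D1 D2 (a, b))) (evD2 D2 b) := by
    intro ω (hω : D2 ω = b)
    simp [ind, indicator_apply, evD, hω]
  replace hp := hp.congr (hind 1)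
  replace hq := hq.congr (hind 0)
  rw [evD2_eq_union hD1v] at hp hq ⊢
  exact union_mixture (measurableSet_evD hD1 hD2) (measurableSet_evD hD1 hD2)
    (disjoint_evD (by simp)) hZ hG hH hp hq

theorem nonneg_evD2 {K : Ω → ℝ} (hD1 : Measurable D1) (hD2 : Measurable D2)
    (hD1v : ∀ ω, D1 ω = 0 ∨ D1 ω = 1) (hpos : ∀ᵐ ω ∂P, 0 < (P⟦evD2 D2 b | m⟧) ω)
    (hZ : Integrable Z P) (hG : HasCondMean P m (evD D1 D2 (1, b)) Z G)
    (hH : HasCondMean P m (evD D1 D2 (0, b)) Z H) (hK : HasCondMean P m (evD2 D2 b) Z K)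
    (hG0 : 0 ≤ᵐ[P] G) (hH0 : 0 ≤ᵐ[P] H) : 0 ≤ᵐ[P] K := by
  rw [evD2_eq_union hD1v] at hpos hK
  exact nonneg_of_union (measurableSet_evD hD1 hD2) (measurableSet_evD hD1 hD2)
    (disjoint_evD (by simp)) hpos hZ hG hH hK hG0 hH0

end HasCondMean

theorem IsCondMeanGiven.condProb_evD2_pos [m𝓧 : MeasurableSpace 𝓧] [IsFiniteMeasure P]
    {X : Ω → 𝓧} {p : 𝓧 → ℝ} (hp : IsCondMeanGiven P X univ (ind (evD D1 D2 d)) p)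
    (hX : Measurable X) (hD1 : Measurable D1) (hD2 : Measurable D2)
    (hpos : ∀ᵐ ω ∂P, 0 < p (X ω)) : ∀ᵐ ω ∂P, 0 < (P⟦evD2 D2 d.2 | m𝓧.comap X⟧) ω := by
  have hA : MeasurableSet (evD D1 D2 d) := measurableSet_evD hD1 hD2
  have hsub : evD D1 D2 d ⊆ evD2 D2 d.2 := fun _ hω => hω.2
  filter_upwards [hp.condProb_pos hX hA hpos, condProb_mono hA (measurableSet_evD2 hD2) hsub]
    with ω hposω hle
  exact hposω.trans_le hle

end TreatmentPaths

section DifferenceInDifferences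

variable [MeasurableSpace Ω] [m𝓧 : MeasurableSpace 𝓧] {P : Measure Ω} [IsFiniteMeasure P]
  {X : Ω → 𝓧} {D1 D2 Y0 Y2 : Ω → ℝ} {Y0p Y2p : ℝ × ℝ → Ω → ℝ} {d : ℝ × ℝ} {b : ℝ}

/-- The trend `E[Y₂(0,0) − Y₀(0,0) ∣ X]` of the untreated potential outcome, which parallel trends
equates with the one given `D = d`. It is encoded as a random variable, not as a function
of `X`, so that no version has to be chosen. -/
def untreatedTrend (P : Measure Ω) (X : Ω → 𝓧) (Y0p Y2p : ℝ × ℝ → Ω → ℝ) : Ω → ℝ :=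
  P[Y2p (0, 0) - Y0p (0, 0) | m𝓧.comap X]

theorem DID.hasCondMean_untreatedTrend (hDID : DID P X D1 D2 Y0p Y2p d) (hX : Measurable X)
    (hD1 : Measurable D1) (hD2 : Measurable D2) (hY0p : Integrable (Y0p (0, 0)) P)
    (hY2p : Integrable (Y2p (0, 0)) P) :
    HasCondMean P (m𝓧.comap X) (evD D1 D2 d) (Y2p (0, 0) - Y0p (0, 0))
      (untreatedTrend P X Y0p Y2p) := by
  obtain ⟨-, tr, htr, htrd⟩ := hDID
  have hT := hY2p.sub hY0p
  have htr_eq : untreatedTrend P X Y0p Y2p =ᵐ[P] tr ∘ X :=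
    (hasCondMean_univ_iff hX.comap_le).1 (htr.hasCondMean hX .univ hT)
  exact (htrd.hasCondMean hX (measurableSet_evD hD1 hD2) hT).congr_right htr_eq.symm

theorem DID.hasCondMean_sub_zero (hDID : DID P X D1 D2 Y0p Y2p d) (hX : Measurable X)
    (hD1 : Measurable D1) (hD2 : Measurable D2) (hcons : ∀ ω, Y0 ω = Y0p (D1 ω, D2 ω) ω)
    (hY0 : Integrable Y0 P) (hY0p : Integrable (Y0p (0, 0)) P) :
    HasCondMean P (m𝓧.comap X) (evD D1 D2 d) (Y0 - Y0p (0, 0)) 0 := by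
  have hA : MeasurableSet (evD D1 D2 d) := measurableSet_evD hD1 hD2
  suffices IsCondMeanGiven P X (evD D1 D2 d) (Y0 - Y0p (0, 0)) 0 from
    this.hasCondMean hX hA (hY0.sub hY0p)
  refine ⟨measurable_zero, fun h hh ⟨C, hC⟩ => ?_⟩
  have hint {Z : Ω → ℝ} (hZ : Integrable Z P) :
      Integrable (fun ω => Z ω * h (X ω)) (P.restrict (evD D1 D2 d)) :=
    hZ.restrict.mul_bdd (hh.comp hX).aestronglyMeasurable (.of_forall fun ω => hC (X ω))
  have hno_anticipation : ∫ ω in evD D1 D2 d, Y0 ω * h (X ω) ∂P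
      = ∫ ω in evD D1 D2 d, Y0p (0, 0) ω * h (X ω) ∂P := by
    rw [← integral_ind_mul hA, ← integral_ind_mul hA, ← hDID.1 h hh ⟨C, hC⟩,
      integral_ind_mul hA, integral_ind_mul hA]
    exact setIntegral_congr_fun hA fun ω hω => by rw [eqOn_evD hcons hω]
  rw [integral_ind_mul hA, integral_ind_mul hA]
  simp only [Pi.sub_apply, Pi.zero_apply, sub_mul, zero_mul, integral_zero]
  rw [integral_sub (hint hY0) (hint hY0p), hno_anticipation, sub_self]

theorem hasCondMean_untreatedTrend_evD2 (hDID : ∀ d ∈ threePaths, DID P X D1 D2 Y0p Y2p d)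
    (hX : Measurable X) (hD1 : Measurable D1) (hD2 : Measurable D2)
    (hD1v : ∀ ω, D1 ω = 0 ∨ D1 ω = 1) (hD2v : ∀ ω, D2 ω = 0 ∨ D2 ω = 1)
    (hY0p : Integrable (Y0p (0, 0)) P) (hY2p : Integrable (Y2p (0, 0)) P) (hb : b = 0 ∨ b = 1) :
    HasCondMean P (m𝓧.comap X) (evD2 D2 b) (Y2p (0, 0) - Y0p (0, 0))
      (untreatedTrend P X Y0p Y2p) := by
  have hT := hY2p.sub hY0p
  have htreated : HasCondMean P (m𝓧.comap X) (evD2 D2 1) (Y2p (0, 0) - Y0p (0, 0))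
      (untreatedTrend P X Y0p Y2p) := by
    refine .evD2_of_evD hD1 hD2 hD1v hT fun a ha =>
      (hDID _ ?_).hasCondMean_untreatedTrend hX hD1 hD2 hY0p hY2p
    rcases ha with rfl | rfl <;> simp [threePaths]
  rcases hb with rfl | rfl
  · have hall : HasCondMean P (m𝓧.comap X) univ (Y2p (0, 0) - Y0p (0, 0))
        (untreatedTrend P X Y0p Y2p) := (hasCondMean_univ_iff hX.comap_le).2 .rfl
    rw [univ_eq_evD2_union hD2v] at hall
    have hdisj : Disjoint (evD2 D2 0) (evD2 D2 1) :=
      disjoint_left.2 fun _ h0 h1 => zero_ne_one (h0.symm.trans h1)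
    exact hall.of_union_left (measurableSet_evD2 hD2) (measurableSet_evD2 hD2) hdisj hT htreated
  · exact htreated

theorem hasCondMean_sub_zero_evD2 (hDID : ∀ d ∈ threePaths, DID P X D1 D2 Y0p Y2p d)
    (hX : Measurable X) (hD1 : Measurable D1) (hD2 : Measurable D2)
    (hD1v : ∀ ω, D1 ω = 0 ∨ D1 ω = 1) (hcons : ∀ ω, Y0 ω = Y0p (D1 ω, D2 ω) ω)
    (hY0 : Integrable Y0 P) (hY0p : Integrable (Y0p (0, 0)) P) (hb : b = 0 ∨ b = 1) :
    HasCondMean P (m𝓧.comap X) (evD2 D2 b) (Y0 - Y0p (0, 0)) 0 := by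
  refine .evD2_of_evD hD1 hD2 hD1v (hY0.sub hY0p) fun a ha => ?_
  rcases eq_zero_or_mem_threePaths (mk_mem_allPaths ha hb) with hd | hd
  · rw [hd]
    exact (hasCondMean_const 0).congr fun ω hω => (sub_eq_zero.2 (eqOn_evD hcons hω)).symm
  · exact (hDID _ hd).hasCondMean_sub_zero hX hD1 hD2 hcons hY0 hY0p

theorem IsCondMeanGiven.hasCondMean_effect {g : 𝓧 → ℝ}
    (hg : IsCondMeanGiven P X (evD D1 D2 d) (Y2p d - Y2p (0, 0)) g) (hX : Measurable X)
    (hD1 : Measurable D1) (hD2 : Measurable D2) (hcons : ∀ ω, Y2 ω = Y2p (D1 ω, D2 ω) ω)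
    (hY2 : Integrable Y2 P) (hY2p : Integrable (Y2p (0, 0)) P) :
    HasCondMean P (m𝓧.comap X) (evD D1 D2 d) (Y2 - Y2p (0, 0)) (g ∘ X) := by
  have heq : EqOn (Y2p d - Y2p (0, 0)) (Y2 - Y2p (0, 0)) (evD D1 D2 d) := fun ω hω => by
    rw [Pi.sub_apply, Pi.sub_apply, eqOn_evD hcons hω]
  exact (hg.congr heq).hasCondMean hX (measurableSet_evD hD1 hD2) (hY2.sub hY2p)

theorem hasCondMean_effect_evD2 {μ : 𝓧 → ℝ} (hDID : ∀ d ∈ threePaths, DID P X D1 D2 Y0p Y2p d)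
    (hX : Measurable X) (hD1 : Measurable D1) (hD2 : Measurable D2)
    (hD1v : ∀ ω, D1 ω = 0 ∨ D1 ω = 1) (hD2v : ∀ ω, D2 ω = 0 ∨ D2 ω = 1)
    (hcons : ∀ ω, Y0 ω = Y0p (D1 ω, D2 ω) ω) (hY0 : Integrable Y0 P) (hY2 : Integrable Y2 P)
    (hY0p : Integrable (Y0p (0, 0)) P) (hY2p : Integrable (Y2p (0, 0)) P) (hb : b = 0 ∨ b = 1)
    (hμ : IsCondMeanGiven P X (evD2 D2 b) (Y2 - Y0) μ) :
    HasCondMean P (m𝓧.comap X) (evD2 D2 b) (Y2 - Y2p (0, 0))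
      (μ ∘ X - untreatedTrend P X Y0p Y2p) := by
  have hA : MeasurableSet (evD2 D2 b) := measurableSet_evD2 hD2
  have htrend := hasCondMean_untreatedTrend_evD2 hDID hX hD1 hD2 hD1v hD2v hY0p hY2p hb
  have hanticipation := hasCondMean_sub_zero_evD2 hDID hX hD1 hD2 hD1v hcons hY0 hY0p hb
  have hbaseline : HasCondMean P (m𝓧.comap X) (evD2 D2 b) (Y2p (0, 0) - Y0)
      (untreatedTrend P X Y0p Y2p) := by
    simpa only [sub_sub_sub_cancel_right, sub_zero] using
      htrend.sub hA (hY2p.sub hY0p) (hY0.sub hY0p) hanticipation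
  simpa only [sub_sub_sub_cancel_right] using
    (hμ.hasCondMean hX hA (hY2.sub hY0)).sub hA (hY2.sub hY0) (hY2p.sub hY0) hbaseline

theorem statement_13_general
    (hX : Measurable X) (hD1 : Measurable D1) (hD2 : Measurable D2)
    (hY0i : Integrable Y0 P) (hY2i : Integrable Y2 P)
    (hD1v : ∀ ω, D1 ω = 0 ∨ D1 ω = 1) (hD2v : ∀ ω, D2 ω = 0 ∨ D2 ω = 1)
    (hY0p : Integrable (Y0p (0, 0)) P) (hY2p : Integrable (Y2p (0, 0)) P)
    (hcons0 : ∀ ω, Y0 ω = Y0p (D1 ω, D2 ω) ω) (hcons2 : ∀ ω, Y2 ω = Y2p (D1 ω, D2 ω) ω)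
    (hDID : ∀ d ∈ threePaths, DID P X D1 D2 Y0p Y2p d)
    (hpos : ∀ b, b = 0 ∨ b = 1 → ∀ᵐ ω ∂P, 0 < (P⟦evD2 D2 b | m𝓧.comap X⟧) ω)
    {g10 : 𝓧 → ℝ} (hg10 : IsCondMeanGiven P X (evD D1 D2 (1, 0)) (Y2p (1, 0) - Y2p (0, 0)) g10)
    (hMTR : ∀ᵐ ω ∂P, 0 ≤ g10 (X ω))
    {Ymin : ℝ} (hYmin : ∀ᵐ ω ∂P, D2 ω = 0 → Ymin ≤ Y2p (0, 0) ω)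
    {m1 m0 : 𝓧 → ℝ} (hm1 : IsCondMeanGiven P X (evD2 D2 1) (Y2 - Y0) m1)
    (hm0 : IsCondMeanGiven P X (evD2 D2 0) (Y2 - Y0) m0)
    {g11 g01 : 𝓧 → ℝ}
    (hg11 : IsCondMeanGiven P X (evD D1 D2 (1, 1)) (Y2p (1, 1) - Y2p (0, 0)) g11)
    (hg01 : IsCondMeanGiven P X (evD D1 D2 (0, 1)) (Y2p (0, 1) - Y2p (0, 0)) g01)
    {p11 p01 : 𝓧 → ℝ} (hp11 : IsCondMeanGiven P X (evD2 D2 1) (ind {ω | D1 ω = 1}) p11)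
    (hp01 : IsCondMeanGiven P X (evD2 D2 1) (ind {ω | D1 ω = 0}) p01)
    {mY20 : 𝓧 → ℝ} (hmY20 : IsCondMeanGiven P X (evD2 D2 0) Y2 mY20) :
    ∀ᵐ ω ∂P,
      (m1 (X ω) - m0 (X ω) ≤ g11 (X ω) * p11 (X ω) + g01 (X ω) * p01 (X ω)) ∧
      (g11 (X ω) * p11 (X ω) + g01 (X ω) * p01 (X ω)
        ≤ m1 (X ω) - m0 (X ω) + mY20 (X ω) - Ymin) := by
  have heffect := hY2i.sub hY2p
  have heffect1 := hasCondMean_effect_evD2 hDID hX hD1 hD2 hD1v hD2v hcons0 hY0i hY2i hY0p hY2p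
    (.inr rfl) hm1
  have heffect0 := hasCondMean_effect_evD2 hDID hX hD1 hD2 hD1v hD2v hcons0 hY0i hY2i hY0p hY2p
    (.inl rfl) hm0
  have hind (a : ℝ) : Integrable (ind {ω | D1 ω = a}) P :=
    integrable_ind (measurableSet_eq_fun hD1 measurable_const)
  have hmix := HasCondMean.evD2_mixture hD1 hD2 hD1v heffect
    (hg11.hasCondMean_effect hX hD1 hD2 hcons2 hY2i hY2p)
    (hg01.hasCondMean_effect hX hD1 hD2 hcons2 hY2i hY2p)
    (hp11.hasCondMean hX (measurableSet_evD2 hD2) (hind 1))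
    (hp01.hasCondMean hX (measurableSet_evD2 hD2) (hind 0))
  have hnever : HasCondMean P (m𝓧.comap X) (evD D1 D2 (0, 0)) (Y2 - Y2p (0, 0)) fun _ => 0 :=
    (hasCondMean_const 0).congr fun ω hω => (sub_eq_zero.2 (eqOn_evD hcons2 hω)).symm
  have hlower := HasCondMean.nonneg_evD2 hD1 hD2 hD1v (hpos 0 (.inl rfl)) heffect
    (hg10.hasCondMean_effect hX hD1 hD2 hcons2 hY2i hY2p) hnever heffect0 hMTR .rfl
  have hupper := heffect0.ae_le_of_ae_le (measurableSet_evD2 hD2) (hpos 0 (.inl rfl)) heffect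
    (hY2i.sub (integrable_const Ymin))
    ((hmY20.hasCondMean hX (measurableSet_evD2 hD2) hY2i).sub (measurableSet_evD2 hD2) hY2i
      (integrable_const Ymin) (hasCondMean_const Ymin))
    (hYmin.mono fun ω h hω => sub_le_sub_left (h hω) _)
  filter_upwards [heffect1.ae_eq (hpos 1 (.inr rfl)) hmix, hlower, hupper] with ω hθ hl hu
  simp only [Pi.sub_apply, Pi.add_apply, Pi.mul_apply, Pi.zero_apply, Function.comp_apply]
    at hθ hl hu
  constructor <;> linarith

end DifferenceInDifferences

/-- Partial identification of a convex combination of PDATTs under monotone treatment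
response and a lower bound on outcomes. -/
theorem statement_13
    [MeasurableSpace Ω] [m𝓧 : MeasurableSpace 𝓧]
    (P : Measure Ω) [IsProbabilityMeasure P]
    (X : Ω → 𝓧) (hX : Measurable X)
    (Y0 Y2 D1 D2 : Ω → ℝ)
    (hY0 : Measurable Y0) (hY2 : Measurable Y2)
    (hD1 : Measurable D1) (hD2 : Measurable D2)
    (hY0i : Integrable Y0 P) (hY2i : Integrable Y2 P)
    (hD1v : ∀ ω, D1 ω = 0 ∨ D1 ω = 1) (hD2v : ∀ ω, D2 ω = 0 ∨ D2 ω = 1)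
    (Y0p Y2p : ℝ × ℝ → Ω → ℝ)
    (hY0p : ∀ e ∈ allPaths, Measurable (Y0p e) ∧ Integrable (Y0p e) P)
    (hY2p : ∀ e ∈ allPaths, Measurable (Y2p e) ∧ Integrable (Y2p e) P)
    (hcons0 : ∀ ω, Y0 ω = Y0p (D1 ω, D2 ω) ω)
    (hcons2 : ∀ ω, Y2 ω = Y2p (D1 ω, D2 ω) ω)
    (hDID : ∀ d ∈ threePaths, DID P X D1 D2 Y0p Y2p d)
    (pP : ℝ × ℝ → 𝓧 → ℝ)
    (hpP : ∀ e ∈ allPaths, IsCondMeanGiven P X Set.univ (ind (evD D1 D2 e)) (pP e))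
    (hpPpos : ∀ e ∈ allPaths, ∀ᵐ ω ∂P, 0 < pP e (X ω))
    (g10 : 𝓧 → ℝ)
    (hg10 : IsCondMeanGiven P X (evD D1 D2 (1, 0))
        (fun ω => Y2p (1, 0) ω - Y2p (0, 0) ω) g10)
    (hMTR : ∀ᵐ ω ∂P, 0 ≤ g10 (X ω))
    (Ymin : ℝ) (hYmin : ∀ e ∈ allPaths, ∀ᵐ ω ∂P, Ymin ≤ Y2p e ω)
    (m1 m0 : 𝓧 → ℝ)
    (hm1 : IsCondMeanGiven P X (evD2 D2 1) (fun ω => Y2 ω - Y0 ω) m1)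
    (hm0 : IsCondMeanGiven P X (evD2 D2 0) (fun ω => Y2 ω - Y0 ω) m0)
    (g11 g01 : 𝓧 → ℝ)
    (hg11 : IsCondMeanGiven P X (evD D1 D2 (1, 1))
        (fun ω => Y2p (1, 1) ω - Y2p (0, 0) ω) g11)
    (hg01 : IsCondMeanGiven P X (evD D1 D2 (0, 1))
        (fun ω => Y2p (0, 1) ω - Y2p (0, 0) ω) g01)
    (p11 p01 : 𝓧 → ℝ)
    (hp11 : IsCondMeanGiven P X (evD2 D2 1) (ind {ω | D1 ω = 1}) p11)
    (hp01 : IsCondMeanGiven P X (evD2 D2 1) (ind {ω | D1 ω = 0}) p01)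
    (mY20 : 𝓧 → ℝ)
    (hmY20 : IsCondMeanGiven P X (evD2 D2 0) Y2 mY20) :
    ∀ᵐ ω ∂P,
      (m1 (X ω) - m0 (X ω) ≤ g11 (X ω) * p11 (X ω) + g01 (X ω) * p01 (X ω)) ∧
      (g11 (X ω) * p11 (X ω) + g01 (X ω) * p01 (X ω)
        ≤ m1 (X ω) - m0 (X ω) + mY20 (X ω) - Ymin) := by
  have h00 : ((0, 0) : ℝ × ℝ) ∈ allPaths := mk_mem_allPaths (.inl rfl) (.inl rfl)
  exact statement_13_general hX hD1 hD2 hY0i hY2i hD1v hD2v (hY0p _ h00).2 (hY2p _ h00).2 hcons0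
    hcons2 hDID (fun b hb => (hpP (0, b) (mk_mem_allPaths (.inl rfl) hb)).condProb_evD2_pos hX hD1
      hD2 (hpPpos _ (mk_mem_allPaths (.inl rfl) hb)))
    hg10 hMTR ((hYmin _ h00).mono fun _ h _ => h) hm1 hm0 hg11 hg01 hp11 hp01 hmY20

end DIDMissing
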